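/- Identification of natural (cross-world) mediation counterfactual means under model M2: under consistency, positivity, A2.1, A2.2 and A2.3, for all a, a* ∈ {0,1} one has E[Y^{a,M^{a*}}] = Ψ_RDE-W(P; a, a*). In particular the natural direct effect E[Y^{1,M^0}] − E[Y^{0,M^0}] equals Ψ_RDE-W(P; 1, 0) − Ψ_RDE-W(P; 0, 0). -/

import Mathlib

open Classical

noncomputable section

/-- Probability of the event `S` under the probability mass function `P`
on a finite sample space. -/
def pr {Ω : Type} [Fintype Ω] (P : Ω → ℝ) (S : Ω → Prop) : ℝ :=
  ∑ ω, if S ω then P ω else 0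

/-- Conditional probability of `S` given `T`, with the convention that it is `0`
when the conditioning event is null (in Lean, `x / 0 = 0`). -/
def cpr {Ω : Type} [Fintype Ω] (P : Ω → ℝ) (S T : Ω → Prop) : ℝ :=
  pr P (fun ω => S ω ∧ T ω) / pr P T

/-- Expectation of `X` under `P`. -/
def expec {Ω : Type} [Fintype Ω] (P : Ω → ℝ) (X : Ω → ℝ) : ℝ :=
  ∑ ω, X ω * P ω

/-- Conditional expectation of `X` given the event `T`, with the convention that
it is `0` when the conditioning event is null. -/
def cexp {Ω : Type} [Fintype Ω] (P : Ω → ℝ) (X : Ω → ℝ) (T : Ω → Prop) : ℝ :=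
  (∑ ω, if T ω then X ω * P ω else 0) / pr P T

/-- The functional `Ψ_RDE-W(P; a, a*)
  = Σ_m Σ_w E[Y | M=m, W=w, A=a] · P(M=m | W=w, A=a*) · P(W=w | A=a)`. -/
def psiRDEW {Ω Wt Mt : Type} [Fintype Ω] [Fintype Wt] [Fintype Mt]
    (P : Ω → ℝ) (A : Ω → Fin 2) (W : Ω → Wt) (M : Ω → Mt) (Y : Ω → ℝ)
    (a astar : Fin 2) : ℝ :=
  ∑ m, ∑ w,
    cexp P Y (fun ω => M ω = m ∧ W ω = w ∧ A ω = a)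
      * cpr P (fun ω => M ω = m) (fun ω => W ω = w ∧ A ω = astar)
      * cpr P (fun ω => W ω = w) (fun ω => A ω = a)

/-- The natural (cross-world) mediation counterfactual
`Y^{a,M^{a*}} := Σ_m 1{M^{a*}=m} · Y^{a,m}`. -/
def natCf {Ω Mt : Type} [Fintype Mt]
    (Mc : Fin 2 → Ω → Mt) (Yc : Fin 2 → Mt → Ω → ℝ) (a astar : Fin 2) : Ω → ℝ :=
  fun ω => ∑ m, if Mc astar ω = m then Yc a m ω else 0

/-!
Within a stratum `W = w`, A2.1 lets one condition `1{M^{a*} = m} · Y^{a,m}` on `A = a` for free, and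
A2.2 then factors its mean as `E[Y^{a,m} | w, a] · P(M^{a*} = m | w, a)`. In the first factor, A2.2
(now for `M^a`) allows conditioning on `M^a = m` as well, after which consistency replaces `Y^{a,m}`
by `Y`. In the second, A2.1 moves the conditioning from `A = a` to `A = a*`, where consistency
replaces `M^{a*}` by `M`. Averaging over the strata, A2.3 gives `P(W = w) = P(W = w | A = a)`.
-/

/-- Conditional independence of the random variables `X` and `Z` given the event `T`, expressed
through the conditional probabilities of single values, which suffices because the sample space is
finite. It holds trivially when `T` is null, since `cpr` is then `0`. -/
def CondIndepOn {Ω : Type} [Fintype Ω] {α β : Type*}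
    (P : Ω → ℝ) (X : Ω → α) (Z : Ω → β) (T : Ω → Prop) : Prop :=
  ∀ x z, cpr P (fun ω => X ω = x ∧ Z ω = z) T
    = cpr P (fun ω => X ω = x) T * cpr P (fun ω => Z ω = z) T

section Conditioning

variable {Ω : Type} [Fintype Ω] {α β γ ι : Type*} {P : Ω → ℝ} {S T : Ω → Prop}

theorem pr_ne_zero_of_cpr_ne_zero (h : cpr P S T ≠ 0) : pr P (fun ω => S ω ∧ T ω) ≠ 0 :=
  left_ne_zero_of_mul h

theorem cpr_eq_pr_of_pr_and_eq_mul (h : pr P (fun ω => S ω ∧ T ω) = pr P S * pr P T)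
    (hT : pr P T ≠ 0) : cpr P S T = pr P S := by
  rw [cpr, h, mul_div_cancel_right₀ _ hT]

theorem cpr_eq_cexp_ite (P : Ω → ℝ) (S T : Ω → Prop) [DecidablePred S] :
    cpr P S T = cexp P (fun ω => if S ω then 1 else 0) T := by
  simp only [cpr, cexp, pr, ite_mul, one_mul, zero_mul]
  congr! 2 with ω
  by_cases hT : T ω <;> simp [hT]

theorem cexp_congr {X X' : Ω → ℝ} (h : ∀ ω, T ω → X ω = X' ω) : cexp P X T = cexp P X' T := by
  unfold cexp
  congr! 3 with ω _ hT
  rw [h ω hT]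

theorem cpr_congr {S' : Ω → Prop} (h : ∀ ω, T ω → (S ω ↔ S' ω)) : cpr P S T = cpr P S' T := by
  simp only [cpr_eq_cexp_ite]
  exact cexp_congr fun ω hT => by simp only [h ω hT]

theorem cexp_sum (P : Ω → ℝ) (s : Finset ι) (X : ι → Ω → ℝ) (T : Ω → Prop) :
    cexp P (fun ω => ∑ i ∈ s, X i ω) T = ∑ i ∈ s, cexp P (X i) T := by
  simp only [cexp, ← Finset.sum_div]
  rw [Finset.sum_comm]
  simp [Finset.sum_mul, Finset.sum_ite_irrel]

theorem cexp_const_mul (P : Ω → ℝ) (c : ℝ) (X : Ω → ℝ) (T : Ω → Prop) :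
    cexp P (fun ω => c * X ω) T = c * cexp P X T := by
  simp only [cexp, ← mul_div_assoc, Finset.mul_sum, mul_ite, mul_zero, mul_assoc]

theorem cexp_mul_pr (hP : ∀ ω, 0 ≤ P ω) (X : Ω → ℝ) (T : Ω → Prop) :
    cexp P X T * pr P T = ∑ ω, if T ω then X ω * P ω else 0 := by
  refine div_mul_cancel_of_imp fun hT => Finset.sum_eq_zero fun ω _ => ?_
  have hω : (if T ω then P ω else 0) = 0 :=
    (Finset.sum_eq_zero_iff_of_nonneg fun ω _ => by split_ifs <;> simp [hP]).1 hT ω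
      (Finset.mem_univ ω)
  split_ifs at hω ⊢ with hTω
  · rw [hω, mul_zero]
  · rfl

theorem expec_eq_sum_cexp_mul_pr [Fintype β] (hP : ∀ ω, 0 ≤ P ω) (X : Ω → ℝ) (W : Ω → β) :
    expec P X = ∑ w, cexp P X (fun ω => W ω = w) * pr P (fun ω => W ω = w) := by
  simp only [cexp_mul_pr hP]
  rw [Finset.sum_comm]
  simp [expec]

theorem expec_apply_eq_sum_cexp_ite_mul_pr [Fintype α] [Fintype β] (hP : ∀ ω, 0 ≤ P ω)
    (N : Ω → α) (Z : α → Ω → ℝ) (W : Ω → β) :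
    expec P (fun ω => Z (N ω) ω)
      = ∑ m, ∑ w, cexp P (fun ω => if N ω = m then Z m ω else 0) (fun ω => W ω = w)
          * pr P (fun ω => W ω = w) := by
  rw [expec_eq_sum_cexp_mul_pr hP _ W, Finset.sum_comm]
  simp only [← Finset.sum_mul, ← cexp_sum, Finset.sum_ite_eq, Finset.mem_univ, if_true]

theorem cexp_ite_eq_cexp_and_mul_cpr (X : Ω → ℝ) (h : cpr P S T ≠ 0) :
    cexp P (fun ω => if S ω then X ω else 0) T
      = cexp P X (fun ω => S ω ∧ T ω) * cpr P S T := by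
  rw [cpr, cexp, cexp, div_mul_div_cancel₀ (pr_ne_zero_of_cpr_ne_zero h)]
  congr! 2 with ω
  by_cases hT : T ω <;> simp [hT]

theorem cexp_ite_comp_eq_sum (P : Ω → ℝ) (X : Ω → α) (g : α → ℝ) (S T : Ω → Prop) :
    cexp P (fun ω => if S ω then g (X ω) else 0) T
      = ∑ x ∈ Finset.univ.image X, g x * cpr P (fun ω => X ω = x ∧ S ω) T := by
  have hdecomp : ∀ ω, (if S ω then g (X ω) else 0)
      = ∑ x ∈ Finset.univ.image X, g x * if X ω = x ∧ S ω then 1 else 0 := fun ω => by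
    by_cases hS : S ω <;> simp [hS]
  simp only [hdecomp, cexp_sum, cexp_const_mul, cpr_eq_cexp_ite]

theorem cexp_comp_eq_sum (P : Ω → ℝ) (X : Ω → α) (g : α → ℝ) (T : Ω → Prop) :
    cexp P (fun ω => g (X ω)) T
      = ∑ x ∈ Finset.univ.image X, g x * cpr P (fun ω => X ω = x) T := by
  simpa using cexp_ite_comp_eq_sum P X g (fun _ => True) T

namespace CondIndepOn

variable {X : Ω → α} {Z : Ω → β}

theorem cexp_ite (h : CondIndepOn P X Z T) (g : α → ℝ) (z : β) :
    cexp P (fun ω => if Z ω = z then g (X ω) else 0) T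
      = cexp P (fun ω => g (X ω)) T * cpr P (fun ω => Z ω = z) T := by
  rw [cexp_ite_comp_eq_sum, cexp_comp_eq_sum, Finset.sum_mul]
  simp only [h _ z, mul_assoc]

theorem cexp_and_eq (h : CondIndepOn P X Z T) (g : α → ℝ) {z : β}
    (hz : cpr P (fun ω => Z ω = z) T ≠ 0) :
    cexp P (fun ω => g (X ω)) (fun ω => Z ω = z ∧ T ω) = cexp P (fun ω => g (X ω)) T :=
  mul_right_cancel₀ hz <|
    (cexp_ite_eq_cexp_and_mul_cpr (fun ω => g (X ω)) hz).symm.trans (h.cexp_ite g z)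

theorem comp_left (h : CondIndepOn P X Z T) (f : α → γ) :
    CondIndepOn P (fun ω => f (X ω)) Z T := by
  intro y z
  have hfactor := h.cexp_ite (fun x => if f x = y then 1 else 0) z
  rw [← cpr_eq_cexp_ite P (fun ω => f (X ω) = y)] at hfactor
  rw [← hfactor, cpr_eq_cexp_ite]
  simp only [and_comm, ite_and]

theorem congr_right (h : CondIndepOn P X Z T) {Z' : Ω → β} (hZ : ∀ ω, T ω → Z ω = Z' ω) :
    CondIndepOn P X Z' T := by
  intro x z
  have hevent : ∀ ω, T ω → (Z' ω = z ↔ Z ω = z) := fun ω hT => by rw [hZ ω hT]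
  rw [cpr_congr hevent, ← h x z]
  exact cpr_congr fun ω hT => and_congr_right fun _ => hevent ω hT

end CondIndepOn

end Conditioning

section Mediation

variable {Ω : Type} [Fintype Ω] {𝒜 ℳ : Type*} {P : Ω → ℝ} {A : Ω → 𝒜} {M N : Ω → ℳ}
  {Y Z : Ω → ℝ} {T : Ω → Prop} {a astar : 𝒜} {m : ℳ}

theorem cpr_counterfactual_eq_cpr (hcons : ∀ ω, A ω = astar → N ω = M ω)
    (hN : CondIndepOn P N A T)
    (ha : cpr P (fun ω => A ω = a) T ≠ 0) (hastar : cpr P (fun ω => A ω = astar) T ≠ 0) :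
    cpr P (fun ω => N ω = m) (fun ω => A ω = a ∧ T ω)
      = cpr P (fun ω => M ω = m) (fun ω => A ω = astar ∧ T ω) := by
  have hdrop : ∀ b, cpr P (fun ω => A ω = b) T ≠ 0 →
      cpr P (fun ω => N ω = m) (fun ω => A ω = b ∧ T ω) = cpr P (fun ω => N ω = m) T := by
    intro b hb
    simp only [cpr_eq_cexp_ite P (fun ω => N ω = m)]
    exact hN.cexp_and_eq (fun n => if n = m then 1 else 0) hb
  rw [hdrop a ha, ← hdrop astar hastar]
  exact cpr_congr fun ω hω => by rw [hcons ω hω.1]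

theorem cexp_counterfactual_eq_cexp (hcons : ∀ ω, T ω → M ω = m → Z ω = Y ω)
    (hZM : CondIndepOn P Z M T) (hm : cpr P (fun ω => M ω = m) T ≠ 0) :
    cexp P Z T = cexp P Y (fun ω => M ω = m ∧ T ω) := by
  calc cexp P Z T = cexp P Z (fun ω => M ω = m ∧ T ω) := (hZM.cexp_and_eq id hm).symm
    _ = cexp P Y (fun ω => M ω = m ∧ T ω) := cexp_congr fun ω hω => hcons ω hω.2 hω.1

theorem cexp_ite_crossWorld_eq_mul (hconsM : ∀ ω, A ω = astar → N ω = M ω)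
    (hconsY : ∀ ω, A ω = a → M ω = m → Z ω = Y ω)
    (ha : cpr P (fun ω => A ω = a) T ≠ 0) (hastar : cpr P (fun ω => A ω = astar) T ≠ 0)
    (hoverlap : cpr P (fun ω => M ω = m) (fun ω => A ω = astar ∧ T ω) ≠ 0 →
      cpr P (fun ω => M ω = m) (fun ω => A ω = a ∧ T ω) ≠ 0)
    (hexch : CondIndepOn P (fun ω => (Z ω, N ω)) A T)
    (hZN : CondIndepOn P Z N (fun ω => A ω = a ∧ T ω))
    (hZM : CondIndepOn P Z M (fun ω => A ω = a ∧ T ω)) :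
    cexp P (fun ω => if N ω = m then Z ω else 0) T
      = cexp P Y (fun ω => M ω = m ∧ A ω = a ∧ T ω)
        * cpr P (fun ω => M ω = m) (fun ω => A ω = astar ∧ T ω) := by
  calc cexp P (fun ω => if N ω = m then Z ω else 0) T
      = cexp P (fun ω => if N ω = m then Z ω else 0) (fun ω => A ω = a ∧ T ω) :=
        (hexch.cexp_and_eq (fun u => if u.2 = m then u.1 else 0) ha).symm
    _ = cexp P Z (fun ω => A ω = a ∧ T ω)
          * cpr P (fun ω => N ω = m) (fun ω => A ω = a ∧ T ω) := hZN.cexp_ite id m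
    _ = cexp P Z (fun ω => A ω = a ∧ T ω)
          * cpr P (fun ω => M ω = m) (fun ω => A ω = astar ∧ T ω) := by
        rw [cpr_counterfactual_eq_cpr hconsM (hexch.comp_left Prod.snd) ha hastar]
    _ = cexp P Y (fun ω => M ω = m ∧ A ω = a ∧ T ω)
          * cpr P (fun ω => M ω = m) (fun ω => A ω = astar ∧ T ω) := by
        refine mul_eq_mul_right_iff.2 (or_iff_not_imp_right.2 fun hm => ?_)
        exact cexp_counterfactual_eq_cexp (fun ω hω => hconsY ω hω.1) hZM (hoverlap hm)

/-- The junk value of `cexp` on a null event `M = m, W = w, A = a` never matters here: overlap or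
A2.3 makes one of the two probabilities multiplying it vanish. -/
theorem nde_identification_M2_general {𝒲 : Type*} [Fintype 𝒲] [Fintype ℳ]
    (hP : ∀ ω, 0 ≤ P ω) {W : Ω → 𝒲} {Mc : 𝒜 → Ω → ℳ} {Yc : 𝒜 → ℳ → Ω → ℝ}
    (hconsM : ∀ b ω, A ω = b → Mc b ω = M ω)
    (hconsY : ∀ m ω, A ω = a → M ω = m → Yc a m ω = Y ω)
    (ha : pr P (fun ω => A ω = a) ≠ 0) (hastar : pr P (fun ω => A ω = astar) ≠ 0)
    (hoverlap : ∀ w m, cpr P (fun ω => M ω = m) (fun ω => W ω = w ∧ A ω = astar) ≠ 0 →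
      cpr P (fun ω => M ω = m) (fun ω => W ω = w ∧ A ω = a) ≠ 0)
    (hA21 : ∀ m w, CondIndepOn P (fun ω => (Yc a m ω, Mc astar ω)) A (fun ω => W ω = w))
    (hA22 : ∀ b m w, CondIndepOn P (Yc a m) (Mc b) (fun ω => W ω = w ∧ A ω = a))
    (hA23 : ∀ w b, pr P (fun ω => W ω = w ∧ A ω = b)
      = pr P (fun ω => W ω = w) * pr P (fun ω => A ω = b)) :
    expec P (fun ω => Yc a (Mc astar ω) ω)
      = ∑ m, ∑ w, cexp P Y (fun ω => M ω = m ∧ W ω = w ∧ A ω = a)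
          * cpr P (fun ω => M ω = m) (fun ω => W ω = w ∧ A ω = astar)
          * cpr P (fun ω => W ω = w) (fun ω => A ω = a) := by
  rw [expec_apply_eq_sum_cexp_ite_mul_pr hP (Mc astar) (Yc a) W]
  refine Finset.sum_congr rfl fun m _ => Finset.sum_congr rfl fun w _ => ?_
  rw [cpr_eq_pr_of_pr_and_eq_mul (hA23 w a) ha]
  refine mul_eq_mul_right_iff.2 (or_iff_not_imp_right.2 fun hw => ?_)
  have hpositive : ∀ b, pr P (fun ω => A ω = b) ≠ 0 →
      cpr P (fun ω => A ω = b) (fun ω => W ω = w) ≠ 0 := by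
    intro b hb
    have hindep := hA23 w b
    simp only [and_comm (a := W _ = w)] at hindep
    rwa [cpr_eq_pr_of_pr_and_eq_mul (hindep.trans (mul_comm _ _)) hw]
  have hYM : CondIndepOn P (Yc a m) M (fun ω => W ω = w ∧ A ω = a) :=
    (hA22 a m w).congr_right fun ω hω => hconsM a ω hω.2
  have hYN := hA22 astar m w
  have hoverlap' := hoverlap w m
  simp only [and_comm (a := W _ = w)] at hYM hYN hoverlap' ⊢
  exact cexp_ite_crossWorld_eq_mul (hconsM astar) (hconsY m) (hpositive a ha)
    (hpositive astar hastar) hoverlap' (hA21 m w) hYN hYM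

end Mediation

theorem natCf_eq {Ω ℳ : Type} [Fintype ℳ] (Mc : Fin 2 → Ω → ℳ) (Yc : Fin 2 → ℳ → Ω → ℝ)
    (a astar : Fin 2) : natCf Mc Yc a astar = fun ω => Yc a (Mc astar ω) ω := by
  simp [natCf, funext_iff]

theorem condIndepOn_pair_of_joint {Ω : Type} [Fintype Ω] {𝒜 ℬ ℳ : Type*} {P : Ω → ℝ}
    {A : Ω → 𝒜} {Mc : Fin 2 → Ω → ℳ} {Yc : ℬ → ℳ → Ω → ℝ} {T : Ω → Prop}
    (hjoint : ∀ (m0 m1 : ℳ) (yv : ℬ → ℳ → ℝ) (a' : 𝒜),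
      cpr P (fun ω => Mc 0 ω = m0 ∧ Mc 1 ω = m1 ∧ (∀ b m, Yc b m ω = yv b m) ∧ A ω = a') T
        = cpr P (fun ω => Mc 0 ω = m0 ∧ Mc 1 ω = m1 ∧ (∀ b m, Yc b m ω = yv b m)) T
          * cpr P (fun ω => A ω = a') T)
    (b : ℬ) (astar : Fin 2) (m : ℳ) :
    CondIndepOn P (fun ω => (Yc b m ω, Mc astar ω)) A T := by
  have hvector : CondIndepOn P (fun ω => (Mc 0 ω, Mc 1 ω, fun b m => Yc b m ω)) A T := by
    rintro ⟨m0, m1, yv⟩ a'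
    simpa only [Prod.mk.injEq, funext_iff, and_assoc] using hjoint m0 m1 yv a'
  fin_cases astar
  · exact hvector.comp_left fun u => (u.2.2 b m, u.1)
  · exact hvector.comp_left fun u => (u.2.2 b m, u.2.1)

/-- Identification of natural (cross-world) mediation counterfactual
means under model `M2`: under consistency, positivity, A2.1, A2.2 and A2.3, for all
`a, a* ∈ {0,1}` one has `E[Y^{a,M^{a*}}] = Ψ_RDE-W(P; a, a*)`; in particular the
natural direct effect `E[Y^{1,M^0}] − E[Y^{0,M^0}]` equals
`Ψ_RDE-W(P;1,0) − Ψ_RDE-W(P;0,0)`. -/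
theorem nde_identification_M2
    (Ω Wt Mt : Type) [Fintype Ω] [Fintype Wt] [Fintype Mt]
    (P : Ω → ℝ) (hP0 : ∀ ω, 0 ≤ P ω) (hP1 : (∑ ω, P ω) = 1)
    (A : Ω → Fin 2) (W : Ω → Wt) (M : Ω → Mt) (Y : Ω → ℝ)
    (Mc : Fin 2 → Ω → Mt) (Yc : Fin 2 → Mt → Ω → ℝ)
    -- consistency
    (hconsM : ∀ (a : Fin 2) (ω : Ω), A ω = a → Mc a ω = M ω)
    (hconsY : ∀ (a : Fin 2) (m : Mt) (ω : Ω), A ω = a → M ω = m → Yc a m ω = Y ω)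
    -- positivity
    (hposA : ∀ a : Fin 2, 0 < pr P (fun ω => A ω = a))
    (hposW : ∀ (a : Fin 2) (w : Wt), 0 < cpr P (fun ω => W ω = w) (fun ω => A ω = a))
    (hposM : ∀ (a : Fin 2) (w : Wt) (m : Mt),
      0 < cpr P (fun ω => M ω = m) (fun ω => W ω = w ∧ A ω = a))
    -- A2.1: the vector (M^0, M^1, (Y^{a,m})_{a,m}) is conditionally independent of A given W
    (hA21 : ∀ (m0 m1 : Mt) (yv : Fin 2 → Mt → ℝ) (w : Wt) (a' : Fin 2),
      cpr P (fun ω => Mc 0 ω = m0 ∧ Mc 1 ω = m1 ∧ (∀ a m, Yc a m ω = yv a m) ∧ A ω = a')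
          (fun ω => W ω = w)
        = cpr P (fun ω => Mc 0 ω = m0 ∧ Mc 1 ω = m1 ∧ (∀ a m, Yc a m ω = yv a m))
              (fun ω => W ω = w)
          * cpr P (fun ω => A ω = a') (fun ω => W ω = w))
    -- A2.2: Y^{a,m} ⟂ M^{a*} given (W, A)
    (hA22 : ∀ (a astar : Fin 2) (m : Mt) (y : ℝ) (mv : Mt) (w : Wt) (a0 : Fin 2),
      cpr P (fun ω => Yc a m ω = y ∧ Mc astar ω = mv) (fun ω => W ω = w ∧ A ω = a0)
        = cpr P (fun ω => Yc a m ω = y) (fun ω => W ω = w ∧ A ω = a0)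
            * cpr P (fun ω => Mc astar ω = mv) (fun ω => W ω = w ∧ A ω = a0))
    -- A2.3: W is independent of A
    (hA23 : ∀ (w : Wt) (a' : Fin 2),
      pr P (fun ω => W ω = w ∧ A ω = a')
        = pr P (fun ω => W ω = w) * pr P (fun ω => A ω = a')) :
    (∀ a astar : Fin 2,
        expec P (natCf Mc Yc a astar) = psiRDEW P A W M Y a astar)
    ∧ (expec P (natCf Mc Yc 1 0) - expec P (natCf Mc Yc 0 0)
        = psiRDEW P A W M Y 1 0 - psiRDEW P A W M Y 0 0) := by
  have hmean : ∀ a astar, expec P (natCf Mc Yc a astar) = psiRDEW P A W M Y a astar := by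
    intro a astar
    rw [natCf_eq]
    exact nde_identification_M2_general hP0 hconsM (hconsY a) (hposA a).ne' (hposA astar).ne'
      (fun w m _ => (hposM a w m).ne')
      (fun m w => condIndepOn_pair_of_joint (hA21 · · · w ·) a astar m)
      (fun b m w y mv => hA22 a b m y mv w a) hA23
  exact ⟨hmean, by rw [hmean, hmean]⟩
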